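/- Let S be an Ellis semigroup, let I and I' be minimal left ideals of S, and let u ∈ I and u' ∈ I' be idempotents. Then the groups u*I and u'*I' are isomorphic: there is a bijection φ : u*I → u'*I' satisfying φ(x*y) = φ(x)*φ(y) for all x, y ∈ u*I. -/

import Mathlib

/-!
The isomorphism is purely algebraic. In a minimal left ideal `I` one has `S * x = I` for all
`x ∈ I`, so idempotents of `I` are right identities on `I`. Put `p = u * u'`, which lies in `I'`,
and choose `q ∈ u' * S * u` with `q * p = u'`. Then `p * q` is an idempotent of `u * S * u`, hence
equals `u`. Thus `x ↦ q * x * p` is an isomorphism from `u * I` to `u' * I'`, with inverse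
`y ↦ p * y * q`.
-/

/-- A left ideal of a magma: a nonempty subset closed under left multiplication
by arbitrary elements. -/
def IsLeftIdeal {S : Type*} [Mul S] (I : Set S) : Prop :=
  I.Nonempty ∧ ∀ a : S, ∀ x ∈ I, a * x ∈ I

/-- A minimal left ideal: a left ideal containing no proper left sub-ideal. -/
def IsMinimalLeftIdeal {S : Type*} [Mul S] (I : Set S) : Prop :=
  IsLeftIdeal I ∧ ∀ J : Set S, IsLeftIdeal J → J ⊆ I → J = I

theorem IsMinimalLeftIdeal.exists_mul_eq {S : Type*} [Semigroup S] {I : Set S}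
    (hI : IsMinimalLeftIdeal I) {x b : S} (hx : x ∈ I) (hb : b ∈ I) : ∃ a, a * x = b := by
  have h : Set.range (fun a : S => a * x) = I := by
    refine hI.2 _ ⟨⟨x * x, x, rfl⟩, ?_⟩ ?_
    · rintro a _ ⟨c, rfl⟩
      exact ⟨a * c, mul_assoc a c x⟩
    · rintro _ ⟨a, rfl⟩
      exact hI.1.2 a x hx
  rwa [← h] at hb

theorem IsMinimalLeftIdeal.mul_idempotent {S : Type*} [Semigroup S] {I : Set S}
    (hI : IsMinimalLeftIdeal I) {u x : S} (hu : u * u = u) (huI : u ∈ I) (hx : x ∈ I) :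
    x * u = x := by
  obtain ⟨a, rfl⟩ := hI.exists_mul_eq huI hx
  rw [mul_assoc, hu]

/-- Elements `p ∈ u * S * u'` and `q ∈ u' * S * u` that are inverse to each other relative to the
idempotents `u` and `u'`. -/
theorem exists_mutually_inverse {S : Type*} [Semigroup S] {I I' : Set S}
    (hI : IsMinimalLeftIdeal I) (hI' : IsMinimalLeftIdeal I') {u u' : S}
    (huI : u ∈ I) (hu : u * u = u) (hu'I : u' ∈ I') (hu' : u' * u' = u') :
    ∃ p ∈ I', ∃ q ∈ I, u * p = p ∧ u' * q = q ∧ p * q = u ∧ q * p = u' := by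
  have hp : u * u' ∈ I' := hI'.1.2 u u' hu'I
  have hup : u * (u * u') = u * u' := by rw [← mul_assoc, hu]
  obtain ⟨a, ha⟩ := hI'.exists_mul_eq hp hu'I
  have hq : u' * a * u ∈ I := hI.1.2 _ u huI
  have hqp : u' * a * u * (u * u') = u' := by
    rw [mul_assoc (u' * a), hup, mul_assoc, ha, hu']
  refine ⟨u * u', hp, u' * a * u, hq, hup, by simp only [← mul_assoc, hu'], ?_, hqp⟩
  generalize hqd : u' * a * u = q at *
  have hu'q : u' * q = q := by rw [← hqd]; simp only [← mul_assoc, hu']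
  have hidem : u * u' * q * (u * u' * q) = u * u' * q := by
    rw [mul_assoc (u * u') q, ← mul_assoc q, hqp, hu'q]
  -- An idempotent of `I` is a right identity on `I`, so `u * (p * q) = u`.
  have h := hI.mul_idempotent hidem (hI.1.2 (u * u') q hq) huI
  rwa [← mul_assoc, hup] at h

/-- Let `S` be an Ellis semigroup, `I, I'` minimal left ideals, and `u ∈ I`, `u' ∈ I'`
idempotents. Then the ideal groups `u*I` and `u'*I'` are isomorphic: there is a
multiplication-preserving bijection from `u*I` onto `u'*I'`. -/
theorem ideal_groups_isomorphic {S : Type*} [Semigroup S] [TopologicalSpace S]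
    [CompactSpace S] [T2Space S] [Nonempty S]
    (hcont : ∀ b : S, Continuous fun x : S => x * b)
    (I I' : Set S) (hI : IsMinimalLeftIdeal I) (hI' : IsMinimalLeftIdeal I')
    (u u' : S) (huI : u ∈ I) (hu : u * u = u) (hu'I : u' ∈ I') (hu' : u' * u' = u') :
    ∃ φ : S → S,
      Set.BijOn φ ((fun x : S => u * x) '' I) ((fun x : S => u' * x) '' I') ∧
      ∀ x ∈ (fun x : S => u * x) '' I, ∀ y ∈ (fun x : S => u * x) '' I,
        φ (x * y) = φ x * φ y := by
  obtain ⟨p, hp, q, hq, hup, hu'q, hpq, hqp⟩ :=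
    exists_mutually_inverse hI hI' huI hu hu'I hu'
  have hL : ∀ x ∈ (fun x : S => u * x) '' I, u * x = x ∧ x * u = x := by
    rintro _ ⟨x, hx, rfl⟩
    exact ⟨by simp only [← mul_assoc, hu],
      hI.mul_idempotent hu huI (hI.1.2 u x hx)⟩
  have hL' : ∀ y ∈ (fun x : S => u' * x) '' I', u' * y = y ∧ y * u' = y := by
    rintro _ ⟨x, hx, rfl⟩
    exact ⟨by simp only [← mul_assoc, hu'],
      hI'.mul_idempotent hu' hu'I (hI'.1.2 u' x hx)⟩
  refine ⟨fun x => q * x * p, ?_, ?_⟩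
  · refine Set.InvOn.bijOn (f' := fun y => p * y * q) ⟨?_, ?_⟩ ?_ ?_
    · intro x hx
      calc p * (q * x * p) * q = (p * q) * x * (p * q) := by simp only [mul_assoc]
        _ = x := by rw [hpq, (hL x hx).1, (hL x hx).2]
    · intro y hy
      calc q * (p * y * q) * p = (q * p) * y * (q * p) := by simp only [mul_assoc]
        _ = y := by rw [hqp, (hL' y hy).1, (hL' y hy).2]
    · intro x _
      exact ⟨q * x * p, hI'.1.2 _ p hp, by simp only [← mul_assoc, hu'q]⟩
    · intro y _
      exact ⟨p * y * q, hI.1.2 _ q hq, by simp only [← mul_assoc, hup]⟩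
  · intro x hx y _
    calc q * (x * y) * p = q * (x * u * y) * p := by rw [(hL x hx).2]
      _ = q * x * p * (q * y * p) := by rw [← hpq]; simp only [mul_assoc]
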